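/- Let n ≥ 4. Every strongly stable ideal I ⊊ S = K[x_1,…,x_n] of initial degree 2 that has a corner of the form (k,2) (a corner in degree 2) has at most n−2 corners. -/

import Mathlib

namespace ExtremalBetti

/-- A monomial of `K[x_1,…,x_n]`, identified with its exponent vector in `ℕ^n`. -/
abbrev Mon (n : ℕ) := Fin n → ℕ

/-- The degree of a monomial. -/
def degree {n : ℕ} (u : Mon n) : ℕ := ∑ i, u i

/-- `m(u)`: the (1-based) index of the largest variable dividing `u`; `m(1) = 0`. -/
def maxVar {n : ℕ} (u : Mon n) : ℕ :=
  (Finset.univ.filter (fun i : Fin n => u i ≠ 0)).sup (fun i => (i : ℕ) + 1)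

/-- The exponent vector of the variable `x_q` (1-based index `q`). -/
def X (n q : ℕ) : Mon n := fun i => if (i : ℕ) + 1 = q then 1 else 0

/-- `lexLT u v` : `v` is strictly lex-greater than `u` (lex order induced by
`x_1 > x_2 > … > x_n`). -/
def lexLT {n : ℕ} (u v : Mon n) : Prop :=
  ∃ i : Fin n, (∀ j : Fin n, j < i → u j = v j) ∧ u i < v i

/-- `lexLE u v` : `v ≥_lex u`. -/
def lexLE {n : ℕ} (u v : Mon n) : Prop := u = v ∨ lexLT u v

/-- `L(top, bot)` in degree `d`: monomials `z` of degree `d` with `top ≥_lex z ≥_lex bot`. -/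
def Lset {n : ℕ} (d : ℕ) (top bot : Mon n) : Set (Mon n) :=
  {z | degree z = d ∧ lexLE z top ∧ lexLE bot z}

/-- `A(k,d)`: monomials of degree `d` with `m(u) = k+1`. -/
def A (n k d : ℕ) : Set (Mon n) := {u | degree u = d ∧ maxVar u = k + 1}

/-- The shadow of a set of monomials. -/
def shad {n : ℕ} (Ms : Set (Mon n)) : Set (Mon n) :=
  {z | ∃ u ∈ Ms, ∃ i : Fin n, z = u + Pi.single i 1}

/-- The `t`-fold iterated shadow. -/
def shadIter {n : ℕ} : ℕ → Set (Mon n) → Set (Mon n)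
  | 0, Ms => Ms
  | t + 1, Ms => shad (shadIter t Ms)

/-- The lexicographic shadow `LexShad^t(𝔐) = L(x_1^{d+t}, w x_n^t)`, where `w` is the
lex-smallest element of `𝔐` (empty if `𝔐` is empty or has no lex-smallest element). -/
def lexShad {n : ℕ} (t : ℕ) (Ms : Set (Mon n)) : Set (Mon n) :=
  {z | ∃ w ∈ Ms, (∀ v ∈ Ms, lexLE w v) ∧
      z ∈ Lset (degree w + t) ((degree w + t) • X n 1) (w + t • X n n)}

/-- A set of monomials is a monomial ideal iff it is upward closed under divisibility. -/
def IsMonIdeal {n : ℕ} (I : Set (Mon n)) : Prop :=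
  ∀ u ∈ I, ∀ v : Mon n, (∀ i, u i ≤ v i) → v ∈ I

/-- `G(I)`: the minimal monomial generators of `I`. -/
def minGens {n : ℕ} (I : Set (Mon n)) : Set (Mon n) :=
  {u ∈ I | ∀ v ∈ I, (∀ i, v i ≤ u i) → v = u}

/-- `G(I)_d`: the minimal generators of degree `d`. -/
def gens {n : ℕ} (I : Set (Mon n)) (d : ℕ) : Set (Mon n) :=
  {u ∈ minGens I | degree u = d}

/-- `I` is a strongly stable (monomial) ideal with `I ⊊ S` (i.e. `1 ∉ I`):
for every minimal generator `u`, every `i` with `x_i ∣ u` and every `j < i`,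
`(x_j u)/x_i ∈ I`. -/
def StronglyStable {n : ℕ} (I : Set (Mon n)) : Prop :=
  IsMonIdeal I ∧ (0 : Mon n) ∉ I ∧
    ∀ u ∈ minGens I, ∀ i : Fin n, u i ≠ 0 →
      ∀ j : Fin n, j < i → (u - Pi.single i 1 + Pi.single j 1) ∈ I

/-- The initial degree `α(I)` of the monomial ideal `I` equals `d`. -/
def initialDegree {n : ℕ} (I : Set (Mon n)) (d : ℕ) : Prop :=
  (∃ u ∈ I, degree u = d) ∧ ∀ u ∈ I, d ≤ degree u

/-- `(k,ℓ)` is a corner of `I`: `k, ℓ ≥ 1`, `k + 1 = max{m(u) : u ∈ G(I)_ℓ}`, and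
`m(u) ≤ k` for every `u ∈ G(I)_j` with `j > ℓ`. -/
def IsCorner {n : ℕ} (I : Set (Mon n)) (k ℓ : ℕ) : Prop :=
  1 ≤ k ∧ 1 ≤ ℓ ∧
  (∃ u ∈ gens I ℓ, maxVar u = k + 1) ∧
  (∀ u ∈ gens I ℓ, maxVar u ≤ k + 1) ∧
  (∀ j, ℓ < j → ∀ u ∈ gens I j, maxVar u ≤ k)

/-- The value of the corner `(k,ℓ)`: `|{u ∈ G(I)_ℓ : m(u) = k+1}|`. -/
noncomputable def cornerValue {n : ℕ} (I : Set (Mon n)) (k ℓ : ℕ) : ℕ :=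
  {u ∈ gens I ℓ | maxVar u = k + 1}.ncard

/-- The set of corners of `I`. -/
def corners {n : ℕ} (I : Set (Mon n)) : Set (ℕ × ℕ) :=
  {c | IsCorner I c.1 c.2}

/-- `(k,ℓ)` is a corner of the submodule `M = ⊕_j I_j e_j` of `S^m`. -/
def IsCornerMod {n m : ℕ} (I : Fin m → Set (Mon n)) (k ℓ : ℕ) : Prop :=
  1 ≤ k ∧ 1 ≤ ℓ ∧
  (∃ j, ∃ u ∈ gens (I j) ℓ, maxVar u = k + 1) ∧
  (∀ j, ∀ u ∈ gens (I j) ℓ, maxVar u ≤ k + 1) ∧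
  (∀ d, ℓ < d → ∀ j, ∀ u ∈ gens (I j) d, maxVar u ≤ k)

/-- The value of the corner `(k,ℓ)` of `M = ⊕_j I_j e_j`: the number of minimal
generators `u e_j` with `deg u = ℓ` and `m(u) = k+1`. -/
noncomputable def cornerValueMod {n m : ℕ} (I : Fin m → Set (Mon n)) (k ℓ : ℕ) : ℕ :=
  {p : Mon n × Fin m | p.1 ∈ gens (I p.2) ℓ ∧ maxVar p.1 = k + 1}.ncard

/-- The set of corners of the submodule `M = ⊕_j I_j e_j`. -/
def cornersMod {n m : ℕ} (I : Fin m → Set (Mon n)) : Set (ℕ × ℕ) :=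
  {c | IsCornerMod I c.1 c.2}

/-- `t = max{p : λ_p ≤ s − p}` (and `t = 0` if no such `p` exists). -/
def tVal (s : ℕ) (l : ℕ → ℕ) : ℕ :=
  ((Finset.Icc 1 s).filter (fun p => l p ≤ s - p)).sup id

/-- The associated sets `B_1, …, B_s` of the corner sequence
`(κ_1,λ_1), …, (κ_s,λ_s)` (given by `k, l : ℕ → ℕ` on indices `1,…,s`);
`B_0 = ∅`. -/
def assocB (n s : ℕ) (k l : ℕ → ℕ) (p : ℕ) : Set (Mon n) :=
  if p = 0 then ∅
  else if s = 1 then A n (k 1) (l 1)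
  else if p = s then {u ∈ A n (k s) (l s) | lexLE ((l s) • X n (k s + 1)) u}
  else if l 1 = 2 ∧ p = 1 then
    {u ∈ A n (k 1) 2 |
      lexLE (X n (if s = 2 then k 2 else k s - 1) + X n (k 1 + 1)) u}
  else if p ≤ tVal s l then
    {u ∈ A n (k p) (l p) |
      lexLE ((∑ j ∈ Finset.Icc (s - l p + 3) s, X n (k j)) +
          X n (k (s - l p + 2) - 1) + X n (k p + 1)) u}
  else
    {u ∈ A n (k p) (l p) |
      lexLE ((∑ j ∈ Finset.Icc (p + 1) s, X n (k j)) +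
          (l p - (s - p)) • X n (k p + 1)) u}

/-- The admissible bound `b_p = |B_p \ LexShad^{λ_p−λ_{p−1}}(B_{p−1})|` of the
`p`-th pair of the corner sequence. -/
noncomputable def admissibleBound (n s : ℕ) (k l : ℕ → ℕ) (p : ℕ) : ℕ :=
  (assocB n s k l p \ lexShad (l p - l (p - 1)) (assocB n s k l (p - 1))).ncard

/-!
Along the corners, `k` decreases as the degree increases. Let `(k, 2)` be a corner of a strongly
stable ideal `I`. There is no corner in degree `1`, since it would force `I` to be generated by
linear forms, so `k` is the largest first entry of a corner. Moreover `x_1 x_i ∈ I` for all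
`i ≤ k + 1`, so `x_1` divides no generator of degree greater than `2`. If `(1, ℓ)` is a corner and
`ℓ > 2`, some generator of degree `ℓ` is therefore `x_2 ^ ℓ`. A corner `(m, d)` with `1 < m < k`
would satisfy `2 < d < ℓ` and come from a generator in `x_2, …, x_{m+1}`, whence `x_2 ^ d ∈ I` by
strong stability, contradicting the minimality of `x_2 ^ ℓ`. So the first entries of the corners
lie in `{1, k}` or in `{2, …, k}`.
-/

section Monomials

variable {n : ℕ} {u v : Mon n}

lemma degree_add (u v : Mon n) : degree (u + v) = degree u + degree v :=
  Finset.sum_add_distrib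

lemma degree_single (i : Fin n) (d : ℕ) : degree (Pi.single i d : Mon n) = d := by
  simp [degree]

lemma degree_eq_zero_iff : degree u = 0 ↔ u = 0 :=
  Fintype.sum_eq_zero_iff_of_nonneg (fun _ => Nat.zero_le _)

lemma exists_apply_ne_zero_of_degree_ne_zero (h : degree u ≠ 0) : ∃ i, u i ≠ 0 :=
  Function.ne_iff.1 (degree_eq_zero_iff.not.1 h)

lemma single_le_iff {i : Fin n} {d : ℕ} : Pi.single i d ≤ u ↔ d ≤ u i := by
  simp [Pi.single, update_le_iff]

lemma single_one_le {i : Fin n} (h : u i ≠ 0) : Pi.single i 1 ≤ u :=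
  single_le_iff.2 (Nat.one_le_iff_ne_zero.2 h)

lemma sub_single_add_single {i : Fin n} (h : u i ≠ 0) :
    u - Pi.single i 1 + Pi.single i 1 = u :=
  tsub_add_cancel_of_le (single_one_le h)

lemma degree_tsub (h : v ≤ u) : degree (u - v) = degree u - degree v := by
  rw [← Nat.add_sub_cancel (n := degree (u - v)) (m := degree v), ← degree_add,
    tsub_add_cancel_of_le h]

lemma lt_of_maxVar_le {k : ℕ} {i : Fin n} (hu : maxVar u ≤ k) (hi : u i ≠ 0) : (i : ℕ) < k :=
  Finset.sup_le_iff.1 hu i (by simpa using hi)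

lemma exists_le_of_lt_maxVar {k : ℕ} (hu : k < maxVar u) : ∃ i : Fin n, k ≤ i ∧ u i ≠ 0 := by
  obtain ⟨i, hi, hki⟩ := Finset.lt_sup_iff.1 hu
  exact ⟨i, Nat.lt_succ_iff.1 hki, (Finset.mem_filter.1 hi).2⟩

lemma maxVar_le (u : Mon n) : maxVar u ≤ n :=
  Finset.sup_le fun i _ => i.isLt

lemma pos_of_apply_ne_zero [NeZero n] {i : Fin n} (h₀ : u 0 = 0) (hi : u i ≠ 0) : 0 < (i : ℕ) :=
  Fin.pos_iff_ne_zero.2 fun h => hi (h ▸ h₀)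

lemma exists_eq_single_degree [NeZero n] (h₀ : u 0 = 0) (hu : maxVar u = 2) :
    ∃ j : Fin n, (j : ℕ) = 1 ∧ u = Pi.single j (degree u) := by
  have support_eq {i : Fin n} (hi : u i ≠ 0) : (i : ℕ) = 1 :=
    le_antisymm (Nat.lt_succ_iff.1 (lt_of_maxVar_le hu.le hi)) (pos_of_apply_ne_zero h₀ hi)
  obtain ⟨j, -, hj⟩ := exists_le_of_lt_maxVar (Nat.lt_of_succ_le hu.ge)
  have apply_eq_zero : ∀ i ≠ j, u i = 0 := fun i hij => by
    by_contra hi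
    exact hij (Fin.ext ((support_eq hi).trans (support_eq hj).symm))
  refine ⟨j, support_eq hj, funext fun i => ?_⟩
  obtain rfl | hij := eq_or_ne i j
  · rw [Pi.single_eq_same, degree, Fintype.sum_eq_single i apply_eq_zero]
  · rw [Pi.single_eq_of_ne hij, apply_eq_zero i hij]

end Monomials

section Generators

variable {n ℓ : ℕ} {I : Set (Mon n)} {u v : Mon n}

lemma mem_minGens_iff_minimal : u ∈ minGens I ↔ Minimal (· ∈ I) u :=
  and_congr_right fun _ => ⟨fun h v hv hvu => (h v hv hvu).ge,
    fun h _ hv hvu => le_antisymm hvu (h hv hvu)⟩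

lemma exists_mem_minGens_le (hu : u ∈ I) : ∃ v ∈ minGens I, v ≤ u := by
  obtain ⟨v, hvu, hv⟩ := exists_minimal_le_of_wellFoundedLT (· ∈ I) u hu
  exact ⟨v, mem_minGens_iff_minimal.2 hv, hvu⟩

lemma degree_eq_of_le_of_mem_gens (hu : u ∈ gens I ℓ) (hv : v ∈ I) (hvu : v ≤ u) :
    degree v = ℓ := by
  rw [hu.1.2 v hv hvu, hu.2]

end Generators

namespace StronglyStable

variable {n : ℕ} {I : Set (Mon n)}

lemma add_single_mem (hI : StronglyStable I) {p : Mon n} {i j : Fin n} (hji : j ≤ i)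
    (h : p + Pi.single i 1 ∈ I) : p + Pi.single j 1 ∈ I := by
  obtain rfl | hji := hji.eq_or_lt
  · exact h
  obtain ⟨v, hv, hvp⟩ := exists_mem_minGens_le h
  by_cases hvi : v i = 0
  · refine hI.1 v hv.1 _ fun t => ?_
    obtain rfl | hti := eq_or_ne t i
    · simp [hvi]
    · exact (hvp t).trans (by simp [hti])
  · exact hI.1 _ (hI.2.2 v hv i hvi j hji) _ (add_le_add_left (tsub_le_iff_right.2 hvp) _)

lemma add_single_degree_mem (hI : StronglyStable I) {j : Fin n} {p u : Mon n}
    (hj : ∀ i, u i ≠ 0 → j ≤ i) (h : p + u ∈ I) : p + Pi.single j (degree u) ∈ I := by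
  induction hd : degree u generalizing p u with
  | zero => simpa [degree_eq_zero_iff.1 hd] using h
  | succ d ih =>
    obtain ⟨i, hi⟩ := exists_apply_ne_zero_of_degree_ne_zero (hd.trans_ne d.succ_ne_zero)
    rw [← sub_single_add_single hi, ← add_assoc] at h
    have hmoved := hI.add_single_mem (hj i hi) h
    rw [add_right_comm] at hmoved
    rw [add_comm d, Pi.single_add, ← add_assoc]
    refine ih (fun t ht => hj t fun hut => ht (by simp [hut])) hmoved ?_
    rw [degree_tsub (single_one_le hi), hd, degree_single, Nat.add_sub_cancel]

end StronglyStable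

namespace IsCorner

variable {n k ℓ k' ℓ' : ℕ} {I : Set (Mon n)}

lemma fst_lt_of_snd_lt (h : IsCorner I k ℓ) (h' : IsCorner I k' ℓ') (hℓ : ℓ < ℓ') : k' < k := by
  obtain ⟨u, hu, hm⟩ := h'.2.2.1
  have := h.2.2.2.2 ℓ' hℓ u hu
  lia

lemma fst_unique (h : IsCorner I k ℓ) (h' : IsCorner I k' ℓ) : k = k' := by
  obtain ⟨u, hu, hm⟩ := h.2.2.1
  obtain ⟨u', hu', hm'⟩ := h'.2.2.1
  have := h.2.2.2.1 u' hu'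
  have := h'.2.2.2.1 u hu
  lia

lemma snd_lt_snd_iff (h : IsCorner I k ℓ) (h' : IsCorner I k' ℓ') : ℓ < ℓ' ↔ k' < k := by
  refine ⟨h.fst_lt_of_snd_lt h', fun hk => ?_⟩
  obtain hlt | rfl | hgt := lt_trichotomy ℓ ℓ'
  · exact hlt
  · exact absurd (h.fst_unique h') hk.ne'
  · exact absurd (h'.fst_lt_of_snd_lt h hgt) hk.asymm

lemma fst_lt (h : IsCorner I k ℓ) : k < n := by
  obtain ⟨u, -, hm⟩ := h.2.2.1
  exact hm.symm.trans_le (maxVar_le u)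

-- Indices in `Fin n` start at `0`: here `Pi.single i 1` is `x_{i+1}`.
lemma single_zero_add_single_mem [NeZero n] (h : IsCorner I k ℓ) (hI : StronglyStable I)
    {i : Fin n} (hi : (i : ℕ) ≤ k) : Pi.single 0 (ℓ - 1) + Pi.single i 1 ∈ I := by
  obtain ⟨w, hw, hm⟩ := h.2.2.1
  obtain ⟨q, hkq, hwq⟩ := exists_le_of_lt_maxVar (k.lt_succ_self.trans_eq hm.symm)
  have hwI : w - Pi.single q 1 + Pi.single q 1 ∈ I := by
    rw [sub_single_add_single hwq]
    exact hw.1.1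
  have hmoved := hI.add_single_mem (Fin.le_def.2 (hi.trans hkq)) hwI
  rw [add_comm] at hmoved ⊢
  have hpushed := hI.add_single_degree_mem (fun t _ => Fin.zero_le t) hmoved
  rwa [degree_tsub (single_one_le hwq), hw.2, degree_single] at hpushed

lemma apply_zero_lt [NeZero n] (h : IsCorner I k ℓ) (hI : StronglyStable I) {u : Mon n}
    (hu : u ∈ gens I ℓ') (hℓ : ℓ < ℓ') : u 0 < ℓ - 1 := by
  by_contra! hle
  have hsub : Pi.single 0 (ℓ - 1) ≤ u := single_le_iff.2 hle
  obtain ⟨i, hi⟩ : ∃ i, (u - Pi.single 0 (ℓ - 1) : Mon n) i ≠ 0 := by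
    apply exists_apply_ne_zero_of_degree_ne_zero
    rw [degree_tsub hsub, hu.2, degree_single]
    lia
  have hui : u i ≠ 0 := fun h0 => hi (by simp [h0])
  have hik := lt_of_maxVar_le (h.2.2.2.2 ℓ' hℓ u hu) hui
  have hdvd : (Pi.single 0 (ℓ - 1) + Pi.single i 1 : Mon n) ≤ u := by
    rw [add_comm, ← le_tsub_iff_right hsub]
    exact single_one_le hi
  have hdeg := degree_eq_of_le_of_mem_gens hu (h.single_zero_add_single_mem hI hik.le) hdvd
  rw [degree_add, degree_single, degree_single, Nat.sub_add_cancel h.2.1] at hdeg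
  exact hℓ.ne hdeg

lemma neZero (h : IsCorner I k ℓ) : NeZero n := ⟨Nat.ne_zero_of_lt h.fst_lt⟩

lemma fst_le_of_snd_eq_two (hk : IsCorner I k 2) (hI : StronglyStable I) (h : IsCorner I k' ℓ) :
    k' ≤ k := by
  have := hk.neZero
  by_contra! hlt
  have hℓ : ℓ < 2 := (h.snd_lt_snd_iff hk).2 hlt
  obtain ⟨u, hu, -⟩ := hk.2.2.1
  -- Here `ℓ = 1`, and the bound reads `u 0 < 0`: all generators are linear.
  have := h.apply_zero_lt hI hu hℓ
  lia

lemma apply_zero_eq_zero [NeZero n] (hk : IsCorner I k 2) (hI : StronglyStable I) {u : Mon n}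
    (hu : u ∈ gens I ℓ) (hℓ : 2 < ℓ) : u 0 = 0 :=
  Nat.lt_one_iff.1 (hk.apply_zero_lt hI hu hℓ)

lemma not_isCorner_of_one_lt_of_lt (hk : IsCorner I k 2) (hI : StronglyStable I)
    (h₁ : IsCorner I 1 ℓ) (hk₁ : 1 < k') (hk₂ : k' < k) : ¬ IsCorner I k' ℓ' := by
  intro h
  have := hk.neZero
  have hℓ : ℓ' < ℓ := (h.snd_lt_snd_iff h₁).2 hk₁
  have hℓ' : 2 < ℓ' := (hk.snd_lt_snd_iff h).2 hk₂
  obtain ⟨u, hu, hum⟩ := h₁.2.2.1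
  obtain ⟨v, hv, -⟩ := h.2.2.1
  obtain ⟨j, hj, hu_eq⟩ :=
    exists_eq_single_degree (hk.apply_zero_eq_zero hI hu (hℓ'.trans hℓ)) hum
  have hpow : Pi.single j ℓ' ∈ I := by
    have le_of_apply_ne_zero (i : Fin n) (hi : v i ≠ 0) : j ≤ i :=
      Fin.le_def.2 (hj ▸ pos_of_apply_ne_zero (hk.apply_zero_eq_zero hI hv hℓ') hi)
    have hmem : 0 + v ∈ I := (zero_add v).symm ▸ hv.1.1
    simpa only [hv.2, zero_add] using hI.add_single_degree_mem le_of_apply_ne_zero hmem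
  have hdvd : Pi.single j ℓ' ≤ u := by
    rw [hu_eq, hu.2]
    exact Pi.single_le_single.2 hℓ.le
  have hdeg := degree_eq_of_le_of_mem_gens hu hpow hdvd
  exact hℓ.ne ((degree_single j ℓ').symm.trans hdeg)

end IsCorner

lemma injOn_fst_corners {n : ℕ} (I : Set (Mon n)) : Set.InjOn Prod.fst (corners I) := by
  rintro ⟨k, ℓ⟩ (h : IsCorner I k ℓ) ⟨k', ℓ'⟩ (h' : IsCorner I k' ℓ') (rfl : k = k')
  have := h.snd_lt_snd_iff h'
  have := h'.snd_lt_snd_iff h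
  exact Prod.ext rfl (by lia)

lemma mapsTo_fst_corners_of_isCorner_one {n k ℓ : ℕ} {I : Set (Mon n)} (hI : StronglyStable I)
    (hk : IsCorner I k 2) (h₁ : IsCorner I 1 ℓ) :
    Set.MapsTo Prod.fst (corners I) ({1, k} : Finset ℕ) := by
  rintro ⟨k', ℓ'⟩ (h : IsCorner I k' ℓ')
  rw [Finset.mem_coe, Finset.mem_insert, Finset.mem_singleton]
  by_contra! hne
  have hk' : k' ≤ k := hk.fst_le_of_snd_eq_two hI h
  have h1k' : 1 ≤ k' := h.1
  exact hk.not_isCorner_of_one_lt_of_lt hI h₁ (by lia) (by lia) h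

theorem statement0_general {n k : ℕ} {I : Set (Mon n)} (hI : StronglyStable I)
    (hk : IsCorner I k 2) : (corners I).Finite ∧ (corners I).ncard ≤ max 2 (k - 1) := by
  obtain ⟨s, hs, hcard⟩ :
      ∃ s : Finset ℕ, Set.MapsTo Prod.fst (corners I) s ∧ s.card ≤ max 2 (k - 1) := by
    by_cases h₁ : ∃ ℓ, IsCorner I 1 ℓ
    · obtain ⟨ℓ, h₁⟩ := h₁
      exact ⟨{1, k}, mapsTo_fst_corners_of_isCorner_one hI hk h₁,
        le_max_of_le_left Finset.card_le_two⟩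
    · refine ⟨Finset.Icc 2 k, fun ⟨k', ℓ'⟩ h => ?_, le_max_of_le_right (by simp)⟩
      have hne : k' ≠ 1 := fun h1 => h₁ ⟨ℓ', h1 ▸ h⟩
      exact Finset.mem_Icc.2 ⟨lt_of_le_of_ne h.1 hne.symm, hk.fst_le_of_snd_eq_two hI h⟩
  refine ⟨.of_injOn hs (injOn_fst_corners I) s.finite_toSet, ?_⟩
  refine (Set.ncard_le_ncard_of_injOn Prod.fst hs (injOn_fst_corners I)).trans ?_
  rwa [Set.ncard_coe_finset]

/-- Let `n ≥ 4`. Every strongly stable ideal `I ⊊ S` of initial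
degree 2 that has a corner in degree 2 has at most `n − 2` corners. -/
theorem statement0 (n : ℕ) (hn : 4 ≤ n) (I : Set (Mon n))
    (hI : StronglyStable I) (hα : initialDegree I 2)
    (k : ℕ) (hk : IsCorner I k 2) :
    (corners I).Finite ∧ (corners I).ncard ≤ n - 2 := by
  have := hk.fst_lt
  exact (statement0_general hI hk).imp_right fun h => h.trans (by lia)

end ExtremalBetti
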